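/- arXiv:2204.03451 — 9 statements merged into one kernel-verified Lean document; each statement's English description precedes it below -/
import Mathlib

section
/- For each fixed ρ with 0 < ρ < 1, the function ε ↦ ∫_{-1}^{-√(1-ρ²)} (1 + (ε-1)a²)^{-1/2} da tends to π/2 − arccos ρ as ε → 0⁺ (limit along the filter of positive reals approaching 0). -/
open Real MeasureTheory Filter

theorem stmt_2 (ρ : ℝ) (hρ0 : 0 < ρ) (hρ1 : ρ < 1) :
    Tendsto (fun ε : ℝ =>
        ∫ a in (-1 : ℝ)..(-Real.sqrt (1 - ρ ^ 2)), (1 + (ε - 1) * a ^ 2) ^ (-(1 / 2) : ℝ))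
      (nhdsWithin 0 (Set.Ioi 0)) (nhds (π / 2 - Real.arccos ρ)) := by
  have hs0 : 0 < √(1 - ρ ^ 2) := Real.sqrt_pos.mpr (by nlinarith)
  have hs1 : √(1 - ρ ^ 2) < 1 := by
    rw [Real.sqrt_lt' one_pos]; nlinarith
  have hac : Real.arccos ρ = Real.arcsin √(1 - ρ ^ 2) := Real.arccos_eq_arcsin hρ0.le
  rw [hac]
  generalize √(1 - ρ ^ 2) = s at hs0 hs1
  have hle : (-1 : ℝ) ≤ -s := by linarith
  have hder : ∀ x ∈ Set.Ioo (-1 : ℝ) (-s),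
      HasDerivAt Real.arcsin ((1 - x ^ 2) ^ (-(1 / 2) : ℝ)) x := by
    intro x hx
    have h := Real.hasDerivAt_arcsin (x := x) (by linarith [hx.1]) (by linarith [hx.2])
    have hp : 0 ≤ 1 - x ^ 2 := by nlinarith [hx.1, hx.2]
    rwa [Real.sqrt_eq_rpow, one_div, ← Real.rpow_neg hp] at h
  have hpos : ∀ x ∈ Set.Ioo (-1 : ℝ) (-s), 0 ≤ (1 - x ^ 2) ^ (-(1 / 2) : ℝ) := by
    intro x hx
    exact Real.rpow_nonneg (by nlinarith [hx.1, hx.2]) _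
  have hint : IntervalIntegrable (fun x : ℝ => (1 - x ^ 2) ^ (-(1 / 2) : ℝ)) volume (-1) (-s) := by
    apply intervalIntegral.intervalIntegrable_deriv_of_nonneg (g := Real.arcsin)
      Real.continuous_arcsin.continuousOn
    · rwa [min_eq_left hle, max_eq_right hle]
    · rwa [min_eq_left hle, max_eq_right hle]
  have hval : ∫ x in (-1 : ℝ)..(-s), (1 - x ^ 2) ^ (-(1 / 2) : ℝ) = π / 2 - Real.arcsin s := by
    rw [intervalIntegral.integral_eq_sub_of_hasDerivAt_of_le hle
      Real.continuous_arcsin.continuousOn hder hint]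
    rw [Real.arcsin_neg, Real.arcsin_neg, Real.arcsin_one]; ring
  rw [← hval]
  apply intervalIntegral.tendsto_integral_filter_of_dominated_convergence
    (fun x : ℝ => (1 - x ^ 2) ^ (-(1 / 2) : ℝ))
  · refine Eventually.of_forall fun ε => ?_
    exact Measurable.aestronglyMeasurable (by fun_prop)
  · filter_upwards [self_mem_nhdsWithin] with ε hε
    refine Eventually.of_forall fun x hx => ?_
    rw [Set.uIoc_of_le hle] at hx
    have hε' : 0 < ε := hε
    have hp : 0 < 1 - x ^ 2 := by nlinarith [hx.1, hx.2]
    have h2 : 1 - x ^ 2 ≤ 1 + (ε - 1) * x ^ 2 := by nlinarith [mul_nonneg hε'.le (sq_nonneg x)]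
    rw [Real.norm_of_nonneg (Real.rpow_nonneg (hp.le.trans h2) _)]
    exact Real.rpow_le_rpow_of_nonpos hp h2 (by norm_num)
  · exact hint
  · refine Eventually.of_forall fun x hx => ?_
    rw [Set.uIoc_of_le hle] at hx
    have hp : 0 < 1 - x ^ 2 := by nlinarith [hx.1, hx.2]
    have h1 : Tendsto (fun ε : ℝ => 1 + (ε - 1) * x ^ 2) (nhdsWithin 0 (Set.Ioi 0))
        (nhds (1 - x ^ 2)) := by
      have hc : Continuous (fun ε : ℝ => 1 + (ε - 1) * x ^ 2) := by fun_prop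
      have h := (hc.tendsto 0).mono_left (nhdsWithin_le_nhds (s := Set.Ioi 0))
      convert h using 2
      ring
    exact h1.rpow_const (Or.inl hp.ne')
end

section
/- For each fixed ρ with 0 < ρ < 1, the function ε ↦ √ε · ∫_{-1}^{-√(1-ρ²)} (1 + (ε-1)a²)^{-3/2} da tends to 1 as ε → 0⁺. -/
open Real MeasureTheory Filter

theorem stmt_4 (ρ : ℝ) (hρ0 : 0 < ρ) (hρ1 : ρ < 1) :
    Tendsto (fun ε : ℝ =>
        Real.sqrt ε *
          ∫ a in (-1 : ℝ)..(-Real.sqrt (1 - ρ ^ 2)), (1 + (ε - 1) * a ^ 2) ^ (-(3 / 2) : ℝ))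
      (nhdsWithin 0 (Set.Ioi 0)) (nhds 1) := by
  have hs2 : Real.sqrt (1 - ρ ^ 2) ^ 2 = 1 - ρ ^ 2 := Real.sq_sqrt (by nlinarith)
  have hs0 : 0 ≤ Real.sqrt (1 - ρ ^ 2) := Real.sqrt_nonneg _
  generalize Real.sqrt (1 - ρ ^ 2) = s at hs2 hs0
  have hs1 : s ≤ 1 := by nlinarith
  have key : ∀ ε : ℝ, 0 < ε →
      1 - Real.sqrt ε * (s * (1 + (ε - 1) * s ^ 2) ^ (-(1 / 2) : ℝ)) =
      Real.sqrt ε * ∫ a in (-1 : ℝ)..(-s), (1 + (ε - 1) * a ^ 2) ^ (-(3 / 2) : ℝ) := by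
    intro ε hε
    have hpos : ∀ a ∈ Set.uIcc (-1 : ℝ) (-s), 0 < 1 + (ε - 1) * a ^ 2 := by
      intro a ha
      rw [Set.uIcc_of_le (by linarith)] at ha
      have h1 : a ^ 2 ≤ 1 := by nlinarith [ha.1, ha.2]
      rcases eq_or_lt_of_le (sq_nonneg a) with h | h
      · rw [← h]; norm_num
      · nlinarith [mul_pos hε h]
    have hint := intervalIntegral.integral_eq_sub_of_hasDerivAt
      (a := (-1 : ℝ)) (b := -s)
      (f := fun a : ℝ => a * (1 + (ε - 1) * a ^ 2) ^ (-(1 / 2) : ℝ))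
      (f' := fun a : ℝ => (1 + (ε - 1) * a ^ 2) ^ (-(3 / 2) : ℝ))
      (by
        intro a ha
        have hu := hpos a ha
        have hd : HasDerivAt (fun a : ℝ => 1 + (ε - 1) * a ^ 2) ((ε - 1) * (2 * a)) a := by
          simpa using ((hasDerivAt_pow 2 a).const_mul (ε - 1)).const_add 1
        have h := (hasDerivAt_id a).mul
          (hd.rpow_const (p := (-(1 / 2) : ℝ)) (Or.inl hu.ne'))
        refine h.congr_deriv ?_
        have e1 : (-(1 / 2) : ℝ) - 1 = -(3 / 2) := by norm_num
        have e2 : (1 + (ε - 1) * a ^ 2) ^ (-(1 / 2) : ℝ) =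
            (1 + (ε - 1) * a ^ 2) ^ (-(3 / 2) : ℝ) * (1 + (ε - 1) * a ^ 2) := by
          rw [← Real.rpow_add_one hu.ne']; norm_num
        rw [e1, e2]
        simp only [id]
        ring)
      (by
        apply ContinuousOn.intervalIntegrable
        apply ContinuousOn.rpow_const (by fun_prop)
        intro a ha
        exact Or.inl (hpos a ha).ne')
    rw [hint]
    have e : Real.sqrt ε * ε ^ (-(1 / 2) : ℝ) = 1 := by
      rw [Real.sqrt_eq_rpow, ← Real.rpow_add hε]; norm_num
    have e3 : 1 + (ε - 1) * (-1 : ℝ) ^ 2 = ε := by ring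
    simp only [e3, neg_sq s]
    linear_combination -e
  have hlim : Tendsto (fun ε : ℝ =>
      1 - Real.sqrt ε * (s * (1 + (ε - 1) * s ^ 2) ^ (-(1 / 2) : ℝ))) (nhds 0) (nhds 1) := by
    have hc : ContinuousAt (fun ε : ℝ =>
      1 - Real.sqrt ε * (s * (1 + (ε - 1) * s ^ 2) ^ (-(1 / 2) : ℝ))) 0 := by
      have : ContinuousAt (fun ε : ℝ => (1 + (ε - 1) * s ^ 2) ^ (-(1 / 2) : ℝ)) 0 := by
        apply ContinuousAt.rpow_const (by fun_prop)
        left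
        rw [hs2]
        nlinarith [mul_pos hρ0 hρ0]
      exact continuousAt_const.sub
        (Real.continuous_sqrt.continuousAt.mul (continuousAt_const.mul this))
    simpa [ContinuousAt] using hc
  refine (hlim.mono_left nhdsWithin_le_nhds).congr' ?_
  filter_upwards [self_mem_nhdsWithin] with ε hε
  exact key ε hε
end

section
/- Let g : [-1,1] → ℝ be continuous. Then √ε · ∫_{-1}^{1} g(a)/(1 + (ε-1)a²)^{3/2} da tends to g(-1) + g(1) as ε → 0⁺. -/
open Real MeasureTheory Filter

lemma aux_pos {ε a : ℝ} (he : 0 < ε) (ha : a ^ 2 ≤ 1) : 0 < 1 + (ε - 1) * a ^ 2 := by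
  rcases eq_or_lt_of_le ha with h | h
  · rw [h]; linarith
  · nlinarith [mul_nonneg he.le (sq_nonneg a)]

lemma aux_cont {ε : ℝ} (he : 0 < ε) :
    ContinuousOn (fun a : ℝ => √ε / (1 + (ε - 1) * a ^ 2) ^ ((3 : ℝ) / 2)) (Set.Icc (-1) 1) := by
  have hp : ∀ a ∈ Set.Icc (-1 : ℝ) 1, 0 < 1 + (ε - 1) * a ^ 2 := fun a ha =>
    aux_pos he (by nlinarith [ha.1, ha.2])
  apply ContinuousOn.div continuousOn_const
  · apply ContinuousOn.rpow_const (by fun_prop)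
    intro a ha
    exact Or.inl (hp a ha).ne'
  · intro a ha
    exact (rpow_pos_of_pos (hp a ha) _).ne'

lemma aux_int {ε : ℝ} (he : 0 < ε) :
    ∫ a in (0 : ℝ)..1, √ε / (1 + (ε - 1) * a ^ 2) ^ ((3 : ℝ) / 2) = 1 := by
  have hsub : Set.uIcc (0 : ℝ) 1 ⊆ Set.Icc (-1) 1 := by
    rw [Set.uIcc_of_le zero_le_one]
    exact Set.Icc_subset_Icc (by norm_num) le_rfl
  rw [intervalIntegral.integral_eq_sub_of_hasDerivAt
    (f := fun a => √ε * (a * (1 + (ε - 1) * a ^ 2) ^ (-(1 : ℝ) / 2)))]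
  · have : (1 + (ε - 1) * 1 ^ 2) = ε := by ring
    simp only [this]
    rw [sqrt_eq_rpow, one_mul, ← rpow_add he]
    norm_num
  · intro a ha
    have ha := hsub ha
    have hp : 0 < 1 + (ε - 1) * a ^ 2 := aux_pos he (by nlinarith [ha.1, ha.2])
    have h1 : HasDerivAt (fun a : ℝ => 1 + (ε - 1) * a ^ 2) ((ε - 1) * (2 * a)) a := by
      simpa using ((hasDerivAt_pow 2 a).const_mul (ε - 1)).const_add 1
    have h2 := ((hasDerivAt_id a).mul (h1.rpow_const (p := -(1 : ℝ) / 2) (Or.inl hp.ne'))).const_mul (√ε)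
    refine h2.congr_deriv ?_
    generalize hw : 1 + (ε - 1) * a ^ 2 = w at *
    have e1 : w ^ (-(1 : ℝ) / 2) = w * w ^ (-(3 : ℝ) / 2) := by
      rw [← rpow_one_add' hp.le (by norm_num)]; norm_num
    have e2 : w ^ (-(1 : ℝ) / 2 - 1) = w ^ (-(3 : ℝ) / 2) := by norm_num
    have e3 : √ε / w ^ ((3 : ℝ) / 2) = √ε * w ^ (-(3 : ℝ) / 2) := by
      rw [neg_div, rpow_neg hp.le, div_eq_mul_inv]
    rw [e1, e2, e3]
    simp only [id]
    rw [← hw]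
    ring
  · exact ((aux_cont he).mono hsub).intervalIntegrable

theorem stmt_5 (g : ℝ → ℝ) (hg : ContinuousOn g (Set.Icc (-1) 1)) :
    Tendsto (fun ε : ℝ =>
        Real.sqrt ε * ∫ a in (-1 : ℝ)..1, g a / (1 + (ε - 1) * a ^ 2) ^ ((3 : ℝ) / 2))
      (nhdsWithin 0 (Set.Ioi 0)) (nhds (g (-1) + g 1)) := by
  have hI : Set.Icc (0 : ℝ) 1 ⊆ Set.Icc (-1) 1 := Set.Icc_subset_Icc (by norm_num) le_rfl
  have hgn : ContinuousOn (fun a => g (-a)) (Set.Icc (-1) 1) :=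
    hg.comp continuous_neg.continuousOn (fun a ha => ⟨by linarith [ha.2], by linarith [ha.1]⟩)
  have hh : ContinuousOn (fun a => g (-a) + g a) (Set.Icc 0 1) :=
    (hgn.add hg).mono hI
  have key := tendsto_setIntegral_peak_smul_of_integrableOn_of_tendsto
    (μ := volume) (s := Set.Icc (0 : ℝ) 1) (t := Set.Icc (0 : ℝ) 1) (x₀ := (1 : ℝ))
    (l := nhdsWithin (0 : ℝ) (Set.Ioi 0))
    (φ := fun ε a : ℝ => √ε / (1 + (ε - 1) * a ^ 2) ^ ((3 : ℝ) / 2))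
    (g := fun a => g (-a) + g a) (a := g (-1) + g 1)
    measurableSet_Icc measurableSet_Icc subset_rfl self_mem_nhdsWithin
    (by simp) ?_ ?_ ?_ ?_ hh.integrableOn_Icc (hh 1 (by simp))
  · refine key.congr' ?_
    filter_upwards [self_mem_nhdsWithin] with ε he
    have he : 0 < ε := he
    rw [integral_Icc_eq_integral_Ioc, ← intervalIntegral.integral_of_le zero_le_one,
      ← intervalIntegral.integral_const_mul]
    have hc := aux_cont he
    have i1 : ∀ f : ℝ → ℝ, ContinuousOn f (Set.Icc (-1) 1) → ∀ x ∈ Set.Icc (-1 : ℝ) 1,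
        ∀ y ∈ Set.Icc (-1 : ℝ) 1, IntervalIntegrable
        (fun a => √ε / (1 + (ε - 1) * a ^ 2) ^ ((3 : ℝ) / 2) * f a) volume x y := by
      intro f hf x hx y hy
      exact ((hc.mul hf).mono (Set.uIcc_subset_Icc hx hy)).intervalIntegrable
    have e : ∀ a, √ε * (g a / (1 + (ε - 1) * a ^ 2) ^ ((3 : ℝ) / 2)) =
        √ε / (1 + (ε - 1) * a ^ 2) ^ ((3 : ℝ) / 2) * g a := fun a => by ring
    simp only [e, smul_eq_mul, mul_add]
    rw [intervalIntegral.integral_add (i1 _ hgn _ (by simp) _ (by simp)) (i1 _ hg _ (by simp) _ (by simp)),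
      ← intervalIntegral.integral_add_adjacent_intervals
        (i1 _ hg (-1) (by simp) 0 (by simp)) (i1 _ hg 0 (by simp) 1 (by simp))]
    congr 1
    have := intervalIntegral.integral_comp_neg (a := (0 : ℝ)) (b := 1)
      (fun a => √ε / (1 + (ε - 1) * a ^ 2) ^ ((3 : ℝ) / 2) * g a)
    simpa using this
  · filter_upwards [self_mem_nhdsWithin] with ε he a ha
    have hp := aux_pos (a := a) he (by nlinarith [ha.1, ha.2])
    positivity
  · intro u hu h1
    obtain ⟨δ, hδ, hb⟩ := Metric.isOpen_iff.1 hu 1 h1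
    rw [Metric.tendstoUniformlyOn_iff]
    intro η hη
    have ht : Tendsto (fun ε : ℝ => √ε / δ ^ ((3 : ℝ) / 2)) (nhdsWithin 0 (Set.Ioi 0)) (nhds 0) := by
      have : Continuous (fun ε : ℝ => √ε / δ ^ ((3 : ℝ) / 2)) := by fun_prop
      simpa using (this.tendsto 0).mono_left nhdsWithin_le_nhds
    filter_upwards [self_mem_nhdsWithin, ht.eventually (gt_mem_nhds hη)] with ε he hlt a ha
    have he : 0 < ε := he
    obtain ⟨⟨h0, h1'⟩, hau⟩ := ha
    have hd : δ ≤ 1 - a := by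
      by_contra hcon
      push Not at hcon
      apply hau
      apply hb
      rw [Metric.mem_ball, Real.dist_eq, abs_lt]
      constructor <;> linarith
    have hw : δ ≤ 1 + (ε - 1) * a ^ 2 := by
      nlinarith [mul_nonneg he.le (sq_nonneg a), mul_nonneg h0 (sub_nonneg.2 h1')]
    have hp : 0 < 1 + (ε - 1) * a ^ 2 := hδ.trans_le hw
    simp only [Pi.zero_apply, dist_zero_left]
    rw [Real.norm_of_nonneg (by positivity)]
    refine lt_of_le_of_lt ?_ hlt
    gcongr
  · refine tendsto_const_nhds.congr' ?_
    filter_upwards [self_mem_nhdsWithin] with ε he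
    rw [integral_Icc_eq_integral_Ioc, ← intervalIntegral.integral_of_le zero_le_one, aux_int he]
  · filter_upwards [self_mem_nhdsWithin] with ε he
    exact ((aux_cont he).mono hI).aestronglyMeasurable measurableSet_Icc
end

section
/- Let g : [-1,1] → ℝ be continuous. Then √ε · ∫_{-1}^{1} g(a)/√(1 + (ε-1)a²) da tends to 0 as ε → 0⁺. -/
open Real MeasureTheory Filter

theorem stmt_6 (g : ℝ → ℝ) (hg : ContinuousOn g (Set.Icc (-1) 1)) :
    Tendsto (fun ε : ℝ =>
        Real.sqrt ε * ∫ a in (-1 : ℝ)..1, g a / Real.sqrt (1 + (ε - 1) * a ^ 2))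
      (nhdsWithin 0 (Set.Ioi 0)) (nhds 0) := by
  have hgi : IntervalIntegrable g volume (-1) 1 :=
    ContinuousOn.intervalIntegrable (by rwa [Set.uIcc_of_le (by norm_num)])
  have key : Tendsto (fun ε : ℝ => ∫ a in (-1 : ℝ)..1,
      Real.sqrt ε * (g a / Real.sqrt (1 + (ε - 1) * a ^ 2)))
      (nhdsWithin 0 (Set.Ioi 0)) (nhds (∫ a in (-1 : ℝ)..1, (0 : ℝ))) := by
    have hev : ∀ᶠ ε : ℝ in nhdsWithin 0 (Set.Ioi 0), ε ∈ Set.Ioo (0 : ℝ) 1 :=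
      Ioo_mem_nhdsGT (by norm_num)
    apply intervalIntegral.tendsto_integral_filter_of_dominated_convergence (fun a => |g a|)
    · refine Eventually.of_forall fun ε => ?_
      have h1 : AEStronglyMeasurable g (volume.restrict (Set.uIoc (-1 : ℝ) 1)) :=
        (intervalIntegrable_iff.1 hgi).aestronglyMeasurable
      have h2 : Measurable fun a : ℝ => (Real.sqrt (1 + (ε - 1) * a ^ 2)) := by fun_prop
      exact ((h1.aemeasurable.div h2.aemeasurable).const_mul _).aestronglyMeasurable
    · filter_upwards [hev] with ε hε
      refine Eventually.of_forall fun a ha => ?_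
      rw [Set.uIoc_of_le (by norm_num)] at ha
      have ha2 : a ^ 2 ≤ 1 := by nlinarith [ha.1, ha.2]
      have hle : ε ≤ 1 + (ε - 1) * a ^ 2 := by nlinarith [hε.1, hε.2]
      have hs : Real.sqrt ε ≤ Real.sqrt (1 + (ε - 1) * a ^ 2) := Real.sqrt_le_sqrt hle
      have hp : 0 < Real.sqrt ε := Real.sqrt_pos.2 hε.1
      have hp2 := hp.trans_le hs
      rw [Real.norm_eq_abs, abs_mul, abs_div, abs_of_pos hp, abs_of_pos hp2, ← mul_div_assoc,
        div_le_iff₀ hp2, mul_comm]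
      exact mul_le_mul_of_nonneg_left hs (abs_nonneg _)
    · exact hgi.abs
    · have hne : ∀ᵐ a : ℝ, a ≠ 1 := by simp [ae_iff]
      filter_upwards [hne] with a ha1 ha
      rw [Set.uIoc_of_le (by norm_num)] at ha
      have hlt : a < 1 := lt_of_le_of_ne ha.2 ha1
      have ha2 : 0 < 1 + ((0 : ℝ) - 1) * a ^ 2 := by nlinarith [ha.1]
      have hc : ContinuousAt (fun ε : ℝ =>
          Real.sqrt ε * (g a / Real.sqrt (1 + (ε - 1) * a ^ 2))) 0 := by
        refine ContinuousAt.mul (by fun_prop) (ContinuousAt.div (by fun_prop) (by fun_prop) ?_)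
        exact (Real.sqrt_pos.2 ha2).ne'
      have := hc.tendsto
      simp only [Real.sqrt_zero, zero_mul] at this
      exact this.mono_left nhdsWithin_le_nhds
  simpa only [intervalIntegral.integral_const_mul, intervalIntegral.integral_zero] using key
end

section
/- Let c₁ < c₂ be real numbers, let f, ψ : [c₁,c₂] → ℝ be continuous, and suppose there is δ > 0 with |ψ(t)| ≥ δ for all t ∈ [c₁,c₂]. Then the function ε ↦ (1/√ε)·∫_{c₁}^{c₂} f(t)ψ(t)/(ε + (1-ε)ψ(t)²) dt − (1/√ε)·∫_{c₁}^{c₂} f(t)/ψ(t) dt is O(√ε) as ε → 0⁺. -/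
open Real MeasureTheory Filter Asymptotics

theorem stmt_8 (c₁ c₂ : ℝ) (hc : c₁ < c₂) (f ψ : ℝ → ℝ)
    (hf : ContinuousOn f (Set.Icc c₁ c₂)) (hψ : ContinuousOn ψ (Set.Icc c₁ c₂))
    (δ : ℝ) (hδ : 0 < δ) (hψδ : ∀ t ∈ Set.Icc c₁ c₂, δ ≤ |ψ t|) :
    (fun ε : ℝ =>
        (1 / Real.sqrt ε) * (∫ t in c₁..c₂, f t * ψ t / (ε + (1 - ε) * ψ t ^ 2)) -
          (1 / Real.sqrt ε) * (∫ t in c₁..c₂, f t / ψ t)) =O[nhdsWithin 0 (Set.Ioi 0)]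
      (fun ε : ℝ => Real.sqrt ε) := by
  have h0 : ∀ t ∈ Set.Icc c₁ c₂, ψ t ≠ 0 := fun t ht => 
    abs_pos.mp (lt_of_lt_of_le hδ (hψδ t ht))
  have hg : ContinuousOn (fun t => f t * (ψ t ^ 2 - 1) / ψ t * (2 / ψ t ^ 2)) (Set.Icc c₁ c₂) := by
    refine ((hf.mul ((hψ.pow 2).sub continuousOn_const)).div hψ h0).mul
      (continuousOn_const.div (hψ.pow 2) fun t ht => pow_ne_zero 2 (h0 t ht))
  obtain ⟨M, hM⟩ := isCompact_Icc.exists_bound_of_continuousOn hg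
  refine IsBigO.of_bound (M * |c₂ - c₁|) ?_
  have hev : ∀ᶠ ε : ℝ in nhdsWithin 0 (Set.Ioi 0), ε ∈ Set.Ioo (0:ℝ) (1/2) :=
    Ioo_mem_nhdsGT (by norm_num)
  filter_upwards [hev] with ε hε
  obtain ⟨he, he2⟩ := hε
  have hD : ∀ t ∈ Set.Icc c₁ c₂, ψ t ^ 2 / 2 ≤ ε + (1 - ε) * ψ t ^ 2 := fun t ht => by
    nlinarith [sq_nonneg (ψ t)]
  have hP : ∀ t ∈ Set.Icc c₁ c₂, 0 < ψ t ^ 2 := fun t ht => by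
    have := h0 t ht
    positivity
  have hD0 : ∀ t ∈ Set.Icc c₁ c₂, 0 < ε + (1 - ε) * ψ t ^ 2 := fun t ht => by
    linarith [hD t ht, hP t ht]
  have i1 : IntervalIntegrable (fun t => f t * ψ t / (ε + (1 - ε) * ψ t ^ 2)) volume c₁ c₂ := by
    apply ContinuousOn.intervalIntegrable_of_Icc hc.le
    exact (hf.mul hψ).div (continuousOn_const.add (continuousOn_const.mul (hψ.pow 2)))
      fun t ht => (hD0 t ht).ne'
  have i2 : IntervalIntegrable (fun t => f t / ψ t) volume c₁ c₂ :=
    ContinuousOn.intervalIntegrable_of_Icc hc.le (hf.div hψ h0)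
  rw [← mul_sub, ← intervalIntegral.integral_sub i1 i2]
  have hb : ‖∫ t in c₁..c₂, (f t * ψ t / (ε + (1 - ε) * ψ t ^ 2) - f t / ψ t)‖
      ≤ (ε * M) * |c₂ - c₁| := by
    apply intervalIntegral.norm_integral_le_of_norm_le_const
    intro t ht
    rw [Set.uIoc_of_le hc.le] at ht
    have ht' := Set.Ioc_subset_Icc_self ht
    have hp := h0 t ht'
    have hd := hD0 t ht'
    have e : f t * ψ t / (ε + (1 - ε) * ψ t ^ 2) - f t / ψ t
        = ε * (f t * (ψ t ^ 2 - 1) / ψ t * (1 / (ε + (1 - ε) * ψ t ^ 2))) := by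
      have hd' := hd.ne'
      generalize hDD : ε + (1 - ε) * ψ t ^ 2 = D at *
      field_simp
      rw [← hDD]; ring
    rw [e, norm_mul, Real.norm_of_nonneg he.le]
    refine mul_le_mul_of_nonneg_left (le_trans ?_ (hM t ht')) he.le
    rw [norm_mul, norm_mul]
    refine mul_le_mul_of_nonneg_left ?_ (norm_nonneg _)
    have hP' := hP t ht'
    rw [Real.norm_of_nonneg (by positivity), Real.norm_of_nonneg (by positivity),
      div_le_div_iff₀ hd hP']
    linarith [hD t ht']
  have hs : 0 < √ε := Real.sqrt_pos.mpr he
  rw [norm_mul, Real.norm_of_nonneg (by positivity), Real.norm_of_nonneg hs.le]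
  calc 1 / √ε * _ ≤ 1 / √ε * ((ε * M) * |c₂ - c₁|) :=
        mul_le_mul_of_nonneg_left hb (by positivity)
    _ = M * |c₂ - c₁| * √ε := by
        have := Real.sq_sqrt he.le
        field_simp
        rw [this]
end

section
/- Let c₁ < c₂ be real numbers, let f : [c₁,c₂] → ℝ be continuous, and let ψ : [c₁,c₂] → ℝ be continuously differentiable with ψ(c₁) = 0 and ψ'(t) ≠ 0 for all t ∈ [c₁,c₂]. Then ∫_{c₁}^{c₂} √ε · f(t)/(ε + (1-ε)ψ(t)²) dt tends to (π/2) · f(c₁)/|ψ'(c₁)| as ε → 0⁺. -/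
open Real MeasureTheory Filter

theorem stmt_9 (c₁ c₂ : ℝ) (hc : c₁ < c₂) (f ψ ψ' : ℝ → ℝ)
    (hf : ContinuousOn f (Set.Icc c₁ c₂))
    (hψ : ∀ t ∈ Set.Icc c₁ c₂, HasDerivAt ψ (ψ' t) t)
    (hψ' : ContinuousOn ψ' (Set.Icc c₁ c₂))
    (hψc₁ : ψ c₁ = 0) (hψ'0 : ∀ t ∈ Set.Icc c₁ c₂, ψ' t ≠ 0) :
    Tendsto (fun ε : ℝ => ∫ t in c₁..c₂, Real.sqrt ε * f t / (ε + (1 - ε) * ψ t ^ 2))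
      (nhdsWithin 0 (Set.Ioi 0)) (nhds (π / 2 * f c₁ / |ψ' c₁|)) := by
  have hmem : c₁ ∈ Set.Icc c₁ c₂ := ⟨le_rfl, hc.le⟩
  have hψc : ContinuousOn ψ (Set.Icc c₁ c₂) := fun t ht => (hψ t ht).continuousAt.continuousWithinAt
  obtain ⟨M, hM⟩ := isCompact_Icc.exists_bound_of_continuousOn hf
  have hM0 : 0 ≤ M := (norm_nonneg _).trans (hM c₁ hmem)
  obtain ⟨m, hm, hmψ⟩ : ∃ m > 0, ∀ t ∈ Set.Icc c₁ c₂, m * (t - c₁) ≤ |ψ t| := by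
    obtain ⟨x, hx, hmin⟩ := isCompact_Icc.exists_isMinOn ⟨c₁, hmem⟩ hψ'.abs
    refine ⟨|ψ' x|, abs_pos.2 (hψ'0 x hx), fun t ht => ?_⟩
    rcases ht.1.eq_or_lt with h | h
    · subst h; simp
    · obtain ⟨y, hy, hy'⟩ := exists_hasDerivAt_eq_slope ψ ψ' h
        (hψc.mono (Set.Icc_subset_Icc_right ht.2))
        (fun y hy => hψ y ⟨hy.1.le, hy.2.le.trans ht.2⟩)
      have h0 : 0 < t - c₁ := sub_pos.2 h
      have : ψ t = ψ' y * (t - c₁) := by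
        rw [hy', hψc₁]; field_simp; ring
      rw [this, abs_mul, abs_of_pos h0]
      have := hmin (show y ∈ Set.Icc c₁ c₂ from ⟨hy.1.le, hy.2.le.trans ht.2⟩)
      exact mul_le_mul_of_nonneg_right this h0.le
  set G : ℝ → ℝ → ℝ := fun ε s =>
    √ε * (√ε * f (c₁ + √ε * s) / (ε + (1 - ε) * ψ (c₁ + √ε * s) ^ 2)) with hG
  set S : ℝ → Set ℝ := fun ε => Set.Ioc 0 ((c₂ - c₁) / √ε) with hS
  have hSm : ∀ ε > 0, ∀ s ∈ S ε, c₁ + √ε * s ∈ Set.Icc c₁ c₂ := by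
    intro ε hε s hs
    have h1 : 0 < √ε := Real.sqrt_pos.2 hε
    have h2 := (le_div_iff₀ h1).1 hs.2
    have h3 := mul_pos h1 hs.1
    constructor <;> linarith
  have hev : ∀ᶠ ε : ℝ in nhdsWithin 0 (Set.Ioi 0), 0 < ε ∧ ε < 3/4 :=
    Ioo_mem_nhdsGT (by norm_num)
  have hpos : ∀ ε : ℝ, 0 < ε → ε < 3/4 → ∀ x : ℝ, 0 < ε + (1 - ε) * x ^ 2 := by
    intro ε h1 h2 x
    have : 0 ≤ (1 - ε) * x ^ 2 := mul_nonneg (by linarith) (sq_nonneg _)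
    linarith
  have ha : 0 < |ψ' c₁| := abs_pos.2 (hψ'0 _ hmem)
  have hlim : ∫ s in Set.Ioi (0:ℝ), f c₁ * (1 + (|ψ' c₁| * s) ^ 2)⁻¹ = π / 2 * f c₁ / |ψ' c₁| := by
    rw [integral_const_mul, integral_comp_mul_left_Ioi (fun x => (1 + x ^ 2)⁻¹) 0 ha]
    simp only [mul_zero, integral_Ioi_inv_one_add_sq, smul_eq_mul, Real.arctan_zero]
    field_simp
    try ring
  rw [← hlim]
  have key : Tendsto (fun ε => ∫ s in Set.Ioi (0:ℝ), (S ε).indicator (G ε) s)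
      (nhdsWithin 0 (Set.Ioi 0))
      (nhds (∫ s in Set.Ioi (0:ℝ), f c₁ * (1 + (|ψ' c₁| * s) ^ 2)⁻¹)) := by
    apply tendsto_integral_filter_of_dominated_convergence (fun s => M * (1 + (m / 2 * s) ^ 2)⁻¹)
    · filter_upwards [hev] with ε hε
      apply AEStronglyMeasurable.restrict
      rw [aestronglyMeasurable_indicator_iff measurableSet_Ioc]
      apply ContinuousOn.aestronglyMeasurable _ measurableSet_Ioc
      have hl : ContinuousOn (fun s => c₁ + √ε * s) (S ε) := by fun_prop
      have h1 := hf.comp hl (hSm ε hε.1)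
      have h2 := hψc.comp hl (hSm ε hε.1)
      exact continuousOn_const.mul ((continuousOn_const.mul h1).div
        (continuousOn_const.add (continuousOn_const.mul (h2.pow 2)))
        (fun s _ => (hpos ε hε.1 hε.2 _).ne'))
    · filter_upwards [hev] with ε hε
      refine Eventually.of_forall fun s => ?_
      by_cases hs : s ∈ S ε
      · rw [Set.indicator_of_mem hs]
        have hf1 := hM _ (hSm ε hε.1 s hs)
        have hp1 := hmψ _ (hSm ε hε.1 s hs)
        have hs0 : 0 < s := hs.1
        have h1 : 0 < √ε := Real.sqrt_pos.2 hε.1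
        have hsq : √ε * √ε = ε := Real.mul_self_sqrt hε.1.le
        have hd := hpos ε hε.1 hε.2 (ψ (c₁ + √ε * s))
        have hGe : G ε s = ε * f (c₁ + √ε * s) / (ε + (1 - ε) * ψ (c₁ + √ε * s) ^ 2) := by
          simp only [hG]; rw [← mul_div_assoc, ← mul_assoc, hsq]
        rw [hGe, norm_div, norm_mul, Real.norm_of_nonneg hd.le, Real.norm_of_nonneg hε.1.le,
          ← div_eq_mul_inv, div_le_div_iff₀ hd (by positivity)]
        have h2 : (m * (√ε * s)) ^ 2 ≤ ψ (c₁ + √ε * s) ^ 2 := by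
          rw [← sq_abs (ψ _)]
          apply pow_le_pow_left₀ (by positivity)
          simpa using hp1
        have h3 : ε * (1 + (m / 2 * s) ^ 2) ≤ ε + (1 - ε) * ψ (c₁ + √ε * s) ^ 2 := by
          have h4 : (m * (√ε * s)) ^ 2 = ε * (m * s) ^ 2 := by rw [← hsq]; ring_nf; simp [hsq]
          have h5 : 1/4 * ψ (c₁ + √ε * s) ^ 2 ≤ (1 - ε) * ψ (c₁ + √ε * s) ^ 2 :=
            mul_le_mul_of_nonneg_right (by linarith [hε.2]) (sq_nonneg _)
          rw [h4] at h2
          nlinarith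
        calc ε * ‖f (c₁ + √ε * s)‖ * (1 + (m / 2 * s) ^ 2)
            = ‖f (c₁ + √ε * s)‖ * (ε * (1 + (m / 2 * s) ^ 2)) := by ring
          _ ≤ M * (ε + (1 - ε) * ψ (c₁ + √ε * s) ^ 2) :=
            mul_le_mul hf1 h3 (mul_nonneg hε.1.le (by positivity)) hM0
      · rw [Set.indicator_of_notMem hs]; simp only [norm_zero]; positivity
    · apply Integrable.restrict
      exact (integrable_inv_one_add_sq.comp_mul_left' (by positivity : m / 2 ≠ 0)).const_mul M
    · refine (ae_restrict_iff' measurableSet_Ioi).2 (Eventually.of_forall fun s hs => ?_)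
      have hs : 0 < s := hs
      have hsqrt : Tendsto (fun ε : ℝ => √ε) (nhdsWithin 0 (Set.Ioi 0)) (nhds 0) := by
        have := (Real.continuous_sqrt.tendsto 0)
        rw [Real.sqrt_zero] at this
        exact this.mono_left nhdsWithin_le_nhds
      have hin : ∀ᶠ ε : ℝ in nhdsWithin 0 (Set.Ioi 0), s ∈ S ε := by
        have h := hsqrt.mul_const s
        rw [zero_mul] at h
        filter_upwards [hev, h.eventually (gt_mem_nhds (sub_pos.2 hc))] with ε hε h'
        refine ⟨hs, (le_div_iff₀ (Real.sqrt_pos.2 hε.1)).2 ?_⟩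
        linarith
      have harg : Tendsto (fun ε : ℝ => c₁ + √ε * s) (nhdsWithin 0 (Set.Ioi 0))
          (nhdsWithin c₁ (Set.Icc c₁ c₂)) := by
        refine tendsto_nhdsWithin_iff.2 ⟨?_, ?_⟩
        · simpa using (hsqrt.mul_const s).const_add c₁
        · filter_upwards [hin, hev] with ε h h' using hSm ε h'.1 s h
      have hfl : Tendsto (fun ε : ℝ => f (c₁ + √ε * s)) (nhdsWithin 0 (Set.Ioi 0)) (nhds (f c₁)) :=
        (hf c₁ hmem).tendsto.comp harg
      have hψl : Tendsto (fun ε : ℝ => ψ (c₁ + √ε * s) / √ε) (nhdsWithin 0 (Set.Ioi 0))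
          (nhds (ψ' c₁ * s)) := by
        have hd := hasDerivAt_iff_tendsto_slope.1 (hψ c₁ hmem)
        have harg2 : Tendsto (fun ε : ℝ => c₁ + √ε * s) (nhdsWithin 0 (Set.Ioi 0))
            (nhdsWithin c₁ {c₁}ᶜ) := by
          refine tendsto_nhdsWithin_iff.2 ⟨?_, ?_⟩
          · simpa using (hsqrt.mul_const s).const_add c₁
          · filter_upwards [hev] with ε h'
            have := mul_pos (Real.sqrt_pos.2 h'.1) hs
            simp only [Set.mem_compl_iff, Set.mem_singleton_iff]
            intro h; linarith
        refine ((hd.comp harg2).mul_const s).congr' ?_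
        filter_upwards [hev] with ε h'
        have := Real.sqrt_pos.2 h'.1
        simp only [Function.comp, slope_def_field, hψc₁, sub_zero, add_sub_cancel_left]
        field_simp
      have hε0 : Tendsto (fun ε : ℝ => ε) (nhdsWithin 0 (Set.Ioi 0)) (nhds 0) :=
        tendsto_id.mono_left nhdsWithin_le_nhds
      have hden := ((hε0.const_sub 1).mul (hψl.pow 2)).const_add 1
      have hne : 1 + (1 - 0) * (ψ' c₁ * s) ^ 2 ≠ 0 := by
        have := sq_nonneg (ψ' c₁ * s)
        intro h; linarith
      have hfin := hfl.mul (hden.inv₀ hne)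
      have e : (1 + (1 - 0) * (ψ' c₁ * s) ^ 2) = 1 + (|ψ' c₁| * s) ^ 2 := by
        rw [mul_pow, mul_pow, sq_abs]; ring
      rw [e] at hfin
      refine hfin.congr' ?_
      filter_upwards [hev, hin] with ε hε h
      rw [Set.indicator_of_mem h]
      have h1 : 0 < √ε := Real.sqrt_pos.2 hε.1
      have hsq : √ε * √ε = ε := Real.mul_self_sqrt hε.1.le
      have hd := hpos ε hε.1 hε.2 (ψ (c₁ + √ε * s))
      have hGe : G ε s = ε * f (c₁ + √ε * s) / (ε + (1 - ε) * ψ (c₁ + √ε * s) ^ 2) := by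
        simp only [hG]; rw [← mul_div_assoc, ← mul_assoc, hsq]
      have h6 : 1 + (1 - ε) * (ψ (c₁ + √ε * s) / √ε) ^ 2
          = (ε + (1 - ε) * ψ (c₁ + √ε * s) ^ 2) / ε := by
        rw [div_pow, Real.sq_sqrt hε.1.le]
        have := hε.1.ne'
        field_simp
      rw [hGe, h6, inv_div]
      ring
  refine key.congr' ?_
  filter_upwards [hev] with ε hε
  have h1 : 0 < √ε := Real.sqrt_pos.2 hε.1
  have hq : 0 ≤ (c₂ - c₁) / √ε := (div_pos (sub_pos.2 hc) h1).le
  rw [setIntegral_indicator measurableSet_Ioc, Set.inter_eq_right.2 (fun x hx => hx.1),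
    ← intervalIntegral.integral_of_le hq]
  simp only [hG]
  rw [intervalIntegral.integral_const_mul, ← smul_eq_mul,
    intervalIntegral.smul_integral_comp_add_mul
      (fun t => √ε * f t / (ε + (1 - ε) * ψ t ^ 2)) (√ε) c₁]
  congr 1
  · simp
  · field_simp; ring
end

section
/- Let c₁ < c₂ be real numbers, let f : [c₁,c₂] → ℝ be continuous, and let ψ : [c₁,c₂] → ℝ be continuously differentiable with ψ(c₂) = 0 and ψ'(t) ≠ 0 for all t ∈ [c₁,c₂]. Then ∫_{c₁}^{c₂} √ε · f(t)/(ε + (1-ε)ψ(t)²) dt tends to (π/2) · f(c₂)/|ψ'(c₂)| as ε → 0⁺. -/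
open Real MeasureTheory Filter

theorem aux_main (c₁ c₂ : ℝ) (hc : c₁ < c₂) (f ψ ψ' : ℝ → ℝ)
    (hf : ContinuousOn f (Set.Icc c₁ c₂))
    (hψ : ∀ t ∈ Set.Icc c₁ c₂, HasDerivAt ψ (ψ' t) t)
    (hψ' : ContinuousOn ψ' (Set.Icc c₁ c₂))
    (hψc₂ : ψ c₂ = 0) (hψ'0 : ∀ t ∈ Set.Icc c₁ c₂, ψ' t ≠ 0) :
    Tendsto (fun e : ℝ => ∫ t in c₁..c₂, e * f t / (e ^ 2 + (1 - e ^ 2) * ψ t ^ 2))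
      (nhdsWithin 0 (Set.Ioi 0)) (nhds (π / 2 * f c₂ / |ψ' c₂|)) := by
  have hmem : c₂ ∈ Set.Icc c₁ c₂ := ⟨hc.le, le_rfl⟩
  have ha : 0 < |ψ' c₂| := abs_pos.2 (hψ'0 _ hmem)
  obtain ⟨m, hm, hmb⟩ : ∃ m > 0, ∀ t ∈ Set.Icc c₁ c₂, m ≤ |ψ' t| := by
    obtain ⟨x, hx, hmin⟩ := isCompact_Icc.exists_isMinOn ⟨c₂, hmem⟩ hψ'.abs
    exact ⟨|ψ' x|, abs_pos.2 (hψ'0 x hx), fun t ht => hmin ht⟩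
  obtain ⟨M, hM⟩ := isCompact_Icc.exists_bound_of_continuousOn hf
  have hM0 : 0 ≤ M := (norm_nonneg _).trans (hM c₂ hmem)
  have hψcont : ContinuousOn ψ (Set.Icc c₁ c₂) :=
    fun t ht => (hψ t ht).continuousAt.continuousWithinAt
  have hlow : ∀ t ∈ Set.Icc c₁ c₂, m ^ 2 * (c₂ - t) ^ 2 ≤ ψ t ^ 2 := by
    intro t ht
    rcases ht.2.eq_or_lt with h | h
    · subst h; simp [hψc₂]
    · have hsub : Set.Icc t c₂ ⊆ Set.Icc c₁ c₂ := Set.Icc_subset_Icc_left ht.1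
      obtain ⟨x, hx, hx2⟩ := exists_hasDerivAt_eq_slope ψ ψ' h (hψcont.mono hsub)
        (fun x hx => hψ x (hsub (Set.Ioo_subset_Icc_self hx)))
      have h1 : 0 < c₂ - t := sub_pos.2 h
      rw [hψc₂, eq_div_iff h1.ne'] at hx2
      have h2 : ψ t ^ 2 = |ψ' x| ^ 2 * (c₂ - t) ^ 2 := by
        rw [sq_abs, ← mul_pow, hx2]; ring
      rw [h2]
      have := hmb x (hsub (Set.Ioo_subset_Icc_self hx))
      gcongr
  set F : ℝ → ℝ → ℝ := fun e => (Set.Ioc 0 ((c₂ - c₁) / e)).indicator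
    (fun s => e ^ 2 * f (c₂ - e * s) / (e ^ 2 + (1 - e ^ 2) * ψ (c₂ - e * s) ^ 2)) with hF
  have hmaps : ∀ e > 0, ∀ s ∈ Set.Ioc 0 ((c₂ - c₁) / e), c₂ - e * s ∈ Set.Icc c₁ c₂ := by
    intro e he s hs
    have h1 := (le_div_iff₀ he).1 hs.2
    have h2 := mul_pos he hs.1
    constructor <;> linarith
  have hsmall : ∀ᶠ e : ℝ in nhdsWithin 0 (Set.Ioi 0), 0 < e ∧ e ^ 2 < 1 / 2 := by
    have h1 : ∀ᶠ e : ℝ in nhdsWithin 0 (Set.Ioi 0), e < 1 / 2 :=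
      nhdsWithin_le_nhds (Iio_mem_nhds (by norm_num))
    filter_upwards [h1, self_mem_nhdsWithin] with e h1 h2
    have h2 : 0 < e := h2
    exact ⟨h2, by nlinarith⟩
  have hden : ∀ e : ℝ, 0 < e → e ^ 2 < 1 / 2 → ∀ s ∈ Set.Ioc 0 ((c₂ - c₁) / e),
      e ^ 2 * (1 + (m / 2 * s) ^ 2) ≤ e ^ 2 + (1 - e ^ 2) * ψ (c₂ - e * s) ^ 2 := by
    intro e he he2 s hs
    have h := hlow _ (hmaps e he s hs)
    have h' : m ^ 2 * (e * s) ^ 2 ≤ ψ (c₂ - e * s) ^ 2 := by simpa using h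
    have h3 : 0 ≤ (e * m * s) ^ 2 := sq_nonneg _
    have h4 : 0 ≤ ψ (c₂ - e * s) ^ 2 := sq_nonneg _
    nlinarith [mul_nonneg (by linarith : 0 ≤ 1 / 2 - e ^ 2) h4]
  have hkey : Tendsto (fun e => ∫ s in Set.Ioi (0:ℝ), F e s) (nhdsWithin 0 (Set.Ioi 0))
      (nhds (∫ s in Set.Ioi (0:ℝ), f c₂ * (1 + (|ψ' c₂| * s) ^ 2)⁻¹)) := by
    apply tendsto_integral_filter_of_dominated_convergence
      (fun s => M * (1 + (m / 2 * s) ^ 2)⁻¹)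
    · filter_upwards [hsmall] with e ⟨he, he2⟩
      apply AEStronglyMeasurable.restrict
      rw [hF, aestronglyMeasurable_indicator_iff measurableSet_Ioc]
      apply ContinuousOn.aestronglyMeasurable _ measurableSet_Ioc
      have hc1 : ContinuousOn (fun s => c₂ - e * s) (Set.Ioc 0 ((c₂ - c₁) / e)) := by fun_prop
      have hf1 := hf.comp hc1 (hmaps e he)
      have hp1 := hψcont.comp hc1 (hmaps e he)
      refine ContinuousOn.div (continuousOn_const.mul hf1)
        (continuousOn_const.add (continuousOn_const.mul (hp1.pow 2))) ?_
      intro s hs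
      exact (lt_of_lt_of_le (by positivity) (hden e he he2 s hs)).ne'
    · filter_upwards [hsmall] with e ⟨he, he2⟩
      filter_upwards with s
      by_cases hs : s ∈ Set.Ioc 0 ((c₂ - c₁) / e)
      · have hd := hden e he he2 s hs
        have hp : 0 < e ^ 2 * (1 + (m / 2 * s) ^ 2) := by positivity
        have hfb := hM _ (hmaps e he s hs)
        rw [hF]
        simp only [Set.indicator_of_mem hs]
        rw [norm_div, norm_mul, Real.norm_of_nonneg (sq_nonneg e),
          Real.norm_of_nonneg (hp.le.trans hd)]
        calc _ ≤ e ^ 2 * M / (e ^ 2 * (1 + (m / 2 * s) ^ 2)) := by gcongr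
          _ = _ := by field_simp
      · rw [hF]
        simp only [Set.indicator_of_notMem hs, norm_zero]
        positivity
    · exact ((integrable_inv_one_add_sq.comp_mul_left' (by positivity : m / 2 ≠ 0)).const_mul
        M).integrableOn
    · filter_upwards [ae_restrict_mem measurableSet_Ioi] with s hs
      have hs : 0 < s := hs
      have hin : ∀ᶠ e : ℝ in nhdsWithin 0 (Set.Ioi 0), s ∈ Set.Ioc 0 ((c₂ - c₁) / e) := by
        have h1 : ∀ᶠ e : ℝ in nhdsWithin 0 (Set.Ioi 0), e < (c₂ - c₁) / s :=
          nhdsWithin_le_nhds (Iio_mem_nhds (div_pos (sub_pos.2 hc) hs))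
        filter_upwards [h1, self_mem_nhdsWithin] with e h1 h2
        have h2 : 0 < e := h2
        refine ⟨hs, ?_⟩
        rw [lt_div_iff₀ hs] at h1
        rw [le_div_iff₀ h2]; linarith
      have hid : Tendsto (fun e : ℝ => e) (nhdsWithin 0 (Set.Ioi 0)) (nhds 0) :=
        nhdsWithin_le_nhds
      have hlin : Tendsto (fun e : ℝ => c₂ - e * s) (nhdsWithin 0 (Set.Ioi 0)) (nhds c₂) := by
        simpa using (hid.mul_const s).const_sub c₂
      have hft : Tendsto (fun e : ℝ => f (c₂ - e * s)) (nhdsWithin 0 (Set.Ioi 0))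
          (nhds (f c₂)) := by
        refine (hf c₂ hmem).tendsto.comp (tendsto_nhdsWithin_iff.2 ⟨hlin, ?_⟩)
        filter_upwards [hin, self_mem_nhdsWithin] with e h1 h2
        exact hmaps e h2 s h1
      have hpt : Tendsto (fun e : ℝ => e⁻¹ * ψ (c₂ - e * s)) (nhdsWithin 0 (Set.Ioi 0))
          (nhds (ψ' c₂ * (-s))) := by
        have h1 : HasDerivAt (fun e : ℝ => c₂ - e * s) (-s) 0 := by
          simpa using ((hasDerivAt_id (0:ℝ)).mul_const s).const_sub c₂
        have h2 : HasDerivAt (fun e : ℝ => ψ (c₂ - e * s)) (ψ' c₂ * (-s)) 0 := by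
          refine HasDerivAt.comp (h₂ := ψ) (0:ℝ) ?_ h1
          simpa using hψ c₂ hmem
        have h3 := h2.tendsto_slope_zero_right
        simpa [hψc₂] using h3
      have hlim : Tendsto (fun e : ℝ => f (c₂ - e * s) *
          (1 + (1 - e ^ 2) * (e⁻¹ * ψ (c₂ - e * s)) ^ 2)⁻¹) (nhdsWithin 0 (Set.Ioi 0))
          (nhds (f c₂ * (1 + (1 - 0 ^ 2) * (ψ' c₂ * (-s)) ^ 2)⁻¹)) := by
        refine hft.mul (Tendsto.inv₀ ((((hid.pow 2).const_sub 1).mul (hpt.pow 2)).const_add 1) ?_)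
        have : 0 ≤ (ψ' c₂ * (-s)) ^ 2 := sq_nonneg _
        norm_num
        positivity
      have heq : f c₂ * (1 + (1 - 0 ^ 2) * (ψ' c₂ * (-s)) ^ 2)⁻¹
          = f c₂ * (1 + (|ψ' c₂| * s) ^ 2)⁻¹ := by
        rw [mul_pow |ψ' c₂|, sq_abs]; ring
      rw [heq] at hlim
      refine hlim.congr' ?_
      filter_upwards [hin, self_mem_nhdsWithin] with e h1 h2
      have h2 : 0 < e := h2
      rw [hF]
      simp only [Set.indicator_of_mem h1]
      have : e ^ 2 + (1 - e ^ 2) * ψ (c₂ - e * s) ^ 2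
          = e ^ 2 * (1 + (1 - e ^ 2) * (e⁻¹ * ψ (c₂ - e * s)) ^ 2) := by
        field_simp
      rw [this, mul_div_mul_left _ _ (by positivity), div_eq_mul_inv]
  have hval : ∫ s in Set.Ioi (0:ℝ), f c₂ * (1 + (|ψ' c₂| * s) ^ 2)⁻¹
      = π / 2 * f c₂ / |ψ' c₂| := by
    rw [integral_const_mul]
    have := integral_comp_mul_left_Ioi (fun x : ℝ => (1 + x ^ 2)⁻¹) 0 ha
    rw [this]
    simp only [mul_zero, integral_Ioi_inv_one_add_sq, arctan_zero, smul_eq_mul]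
    field_simp
    ring
  rw [hval] at hkey
  refine hkey.congr' ?_
  filter_upwards [self_mem_nhdsWithin] with e he
  have he : 0 < e := he
  have hR : 0 ≤ (c₂ - c₁) / e := (div_pos (sub_pos.2 hc) he).le
  rw [hF]
  simp only
  rw [setIntegral_indicator measurableSet_Ioc, Set.inter_eq_right.2 Set.Ioc_subset_Ioi_self,
    ← intervalIntegral.integral_of_le hR]
  have h := intervalIntegral.integral_comp_sub_mul (a := 0) (b := (c₂ - c₁) / e)
    (fun t => e ^ 2 * f t / (e ^ 2 + (1 - e ^ 2) * ψ t ^ 2)) he.ne' c₂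
  rw [h, mul_div_cancel₀ _ he.ne', sub_sub_cancel, mul_zero, sub_zero, smul_eq_mul,
    ← intervalIntegral.integral_const_mul]
  congr 1
  ext t
  field_simp

theorem stmt_10 (c₁ c₂ : ℝ) (hc : c₁ < c₂) (f ψ ψ' : ℝ → ℝ)
    (hf : ContinuousOn f (Set.Icc c₁ c₂))
    (hψ : ∀ t ∈ Set.Icc c₁ c₂, HasDerivAt ψ (ψ' t) t)
    (hψ' : ContinuousOn ψ' (Set.Icc c₁ c₂))
    (hψc₂ : ψ c₂ = 0) (hψ'0 : ∀ t ∈ Set.Icc c₁ c₂, ψ' t ≠ 0) :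
    Tendsto (fun ε : ℝ => ∫ t in c₁..c₂, Real.sqrt ε * f t / (ε + (1 - ε) * ψ t ^ 2))
      (nhdsWithin 0 (Set.Ioi 0)) (nhds (π / 2 * f c₂ / |ψ' c₂|)) := by
  have h := aux_main c₁ c₂ hc f ψ ψ' hf hψ hψ' hψc₂ hψ'0
  have hs : Tendsto Real.sqrt (nhdsWithin 0 (Set.Ioi 0)) (nhdsWithin 0 (Set.Ioi 0)) := by
    refine tendsto_nhdsWithin_iff.2 ⟨?_, ?_⟩
    · simpa using (Real.continuous_sqrt.tendsto 0).mono_left nhdsWithin_le_nhds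
    · filter_upwards [self_mem_nhdsWithin] with e he
      exact Real.sqrt_pos.2 he
  refine (h.comp hs).congr' ?_
  filter_upwards [self_mem_nhdsWithin] with e he
  have he : 0 < e := he
  simp only [Function.comp, Real.sq_sqrt he.le]
end

section
/- Let c₁ < c₂ be real numbers and let ψ : [c₁,c₂] → ℝ be continuously differentiable with ψ(c₁) = 0 and ψ'(t) ≠ 0 for all t ∈ [c₁,c₂]. Then the function t ↦ log|ψ(t)| is (Lebesgue) integrable on the interval [c₁,c₂]. -/
open Real MeasureTheory Filter

theorem stmt_13 (c₁ c₂ : ℝ) (hc : c₁ < c₂) (ψ ψ' : ℝ → ℝ)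
    (hψ : ∀ t ∈ Set.Icc c₁ c₂, HasDerivAt ψ (ψ' t) t)
    (hψ' : ContinuousOn ψ' (Set.Icc c₁ c₂))
    (hψc₁ : ψ c₁ = 0) (hψ'0 : ∀ t ∈ Set.Icc c₁ c₂, ψ' t ≠ 0) :
    IntegrableOn (fun t => Real.log |ψ t|) (Set.Icc c₁ c₂) := by
  have hcont : ContinuousOn ψ (Set.Icc c₁ c₂) :=
    fun t ht => (hψ t ht).continuousAt.continuousWithinAt
  obtain ⟨C, hC⟩ := isCompact_Icc.exists_bound_of_continuousOn (hψ'.log hψ'0)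
  have hC0 : 0 ≤ C := (norm_nonneg _).trans (hC c₁ ⟨le_rfl, hc.le⟩)
  have h1 : IntervalIntegrable (fun t => Real.log (t - c₁)) volume c₁ c₂ := by
    have h := (intervalIntegral.intervalIntegrable_log' (a := 0) (b := c₂ - c₁)).comp_sub_right c₁
    simpa using h
  have h2 : IntegrableOn (fun t => Real.log (t - c₁)) (Set.Icc c₁ c₂) :=
    (intervalIntegrable_iff_integrableOn_Icc_of_le hc.le).1 h1
  have h3 : IntegrableOn (fun t => C + ‖Real.log (t - c₁)‖) (Set.Icc c₁ c₂) :=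
    (integrableOn_const (by simp)).add h2.norm
  refine Integrable.mono' h3 ?_ ?_
  · simp only [Real.log_abs]
    exact (Real.measurable_log.comp_aemeasurable
      (hcont.aemeasurable measurableSet_Icc)).aestronglyMeasurable
  · refine (ae_restrict_iff' measurableSet_Icc).2 (Eventually.of_forall fun t ht => ?_)
    rcases ht.1.eq_or_lt with rfl | hlt
    · simpa [hψc₁] using hC0
    · obtain ⟨x, hx, hxe⟩ := exists_hasDerivAt_eq_slope ψ ψ' hlt
        (hcont.mono (Set.Icc_subset_Icc_right ht.2))
        (fun x hx => hψ x ⟨hx.1.le, hx.2.le.trans ht.2⟩)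
      have hxm : x ∈ Set.Icc c₁ c₂ := ⟨hx.1.le, hx.2.le.trans ht.2⟩
      have hp : t - c₁ ≠ 0 := (sub_pos.2 hlt).ne'
      have he : ψ t = ψ' x * (t - c₁) := by
        rw [hxe, hψc₁]; field_simp; ring
      rw [Real.log_abs, he, Real.log_mul (hψ'0 x hxm) hp]
      exact (norm_add_le _ _).trans (by gcongr; exact hC x hxm)
end

section
/- Let C > 0 and ρ > 0. Then ∫_0^ρ √ε/(ε + C²t⁴) dt tends to +∞ as ε → 0⁺ (i.e., for every M > 0 there is ε₀ > 0 such that the integral exceeds M for all 0 < ε < ε₀). -/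
open Real MeasureTheory Filter

theorem stmt_18 (C ρ : ℝ) (hC : 0 < C) (hρ : 0 < ρ) :
    Tendsto (fun ε : ℝ => ∫ t in (0 : ℝ)..ρ, Real.sqrt ε / (ε + C ^ 2 * t ^ 4))
      (nhdsWithin 0 (Set.Ioi 0)) atTop := by
  have ha : Tendsto (fun ε : ℝ => √(√ε)) (nhdsWithin 0 (Set.Ioi 0))
      (nhdsWithin 0 (Set.Ioi 0)) := by
    apply tendsto_nhdsWithin_of_tendsto_nhds_of_eventually_within
    · have h : Continuous (fun ε : ℝ => √(√ε)) := by fun_prop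
      have h2 := h.tendsto 0
      simp only [Real.sqrt_zero] at h2
      exact h2.mono_left nhdsWithin_le_nhds
    · filter_upwards [self_mem_nhdsWithin] with ε hε
      exact Real.sqrt_pos.2 (Real.sqrt_pos.2 hε)
  have hK : (0 : ℝ) < (1 + C ^ 2)⁻¹ := by positivity
  have hlow := (tendsto_inv_nhdsGT_zero.comp ha).const_mul_atTop hK
  refine tendsto_atTop_mono' _ ?_ hlow
  filter_upwards [self_mem_nhdsWithin, ha.eventually (Ioo_mem_nhdsGT hρ)] with ε hε hb
  have hε' : (0 : ℝ) < ε := hε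
  simp only [Function.comp]
  have h2 : √(√ε) ^ 2 = √ε := Real.sq_sqrt (Real.sqrt_nonneg _)
  have h4 : √(√ε) ^ 4 = ε := by
    rw [show √(√ε) ^ 4 = (√(√ε) ^ 2) ^ 2 by ring, h2, Real.sq_sqrt hε'.le]
  obtain ⟨h0, h1⟩ := hb
  generalize √(√ε) = a at *
  rw [← h2]
  clear h2
  subst h4
  have hc : Continuous (fun t : ℝ => a ^ 2 / (a ^ 4 + C ^ 2 * t ^ 4)) := by
    refine Continuous.div (by fun_prop) (by fun_prop) (fun t => ?_)
    positivity
  calc (1 + C ^ 2)⁻¹ * a⁻¹ = ∫ t in (0 : ℝ)..a, a ^ 2 / (a ^ 4 + C ^ 2 * a ^ 4) := by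
        rw [intervalIntegral.integral_const, smul_eq_mul]
        field_simp
        try ring
    _ ≤ ∫ t in (0 : ℝ)..a, a ^ 2 / (a ^ 4 + C ^ 2 * t ^ 4) := by
        apply intervalIntegral.integral_mono_on h0.le (by simp) (hc.intervalIntegrable _ _)
        intro t ht
        have := ht.1
        have := ht.2
        gcongr
    _ ≤ _ := by
        apply intervalIntegral.integral_mono_interval le_rfl h0.le h1.le _
          (hc.intervalIntegrable _ _)
        exact Filter.Eventually.of_forall (fun t => by simp only [Pi.zero_apply]; positivity)
end
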